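/- arXiv:1704.00989 — 4 statements merged into one kernel-verified Lean document; each statement's English description precedes it below -/
import Mathlib

section
/- Let E be the Euclidean space ℝⁿ, let F, G : E → ℝ be convex functions, let S ⊆ E be a set, and let h₀ ∈ S with F(h₀) ≥ 0 and G(h₀) > 0. Set μ = F(h₀)/G(h₀). Suppose s ∈ E is a subgradient of G at h₀, and suppose h' ∈ S minimises the function Φ(h) = F(h) − μ·⟨h − h₀, s⟩ + ‖h − h₀‖² over S. If moreover G(h') > 0, then F(h')/G(h') + ‖h' − h₀‖²/G(h') ≤ F(h₀)/G(h₀). (Sufficient decrease property of the generalised inverse power method, Lemma 1 of the paper.) -/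
open scoped RealInnerProductSpace

/-- Sufficient decrease property of the generalised inverse power method
(Lemma 1 of the paper). -/
theorem sufficient_decrease
    {n : ℕ}
    (F G : EuclideanSpace ℝ (Fin n) → ℝ)
    (hF : ConvexOn ℝ Set.univ F) (hG : ConvexOn ℝ Set.univ G)
    (S : Set (EuclideanSpace ℝ (Fin n))) (h₀ : EuclideanSpace ℝ (Fin n)) (hh₀ : h₀ ∈ S)
    (hF₀ : 0 ≤ F h₀) (hG₀ : 0 < G h₀)
    (μ : ℝ) (hμ : μ = F h₀ / G h₀)
    (s : EuclideanSpace ℝ (Fin n)) (hs : ∀ h, G h ≥ G h₀ + ⟪s, h - h₀⟫)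
    (h' : EuclideanSpace ℝ (Fin n)) (hh' : h' ∈ S)
    (hmin : ∀ h ∈ S,
      F h' - μ * ⟪h' - h₀, s⟫ + ‖h' - h₀‖ ^ 2 ≤
        F h - μ * ⟪h - h₀, s⟫ + ‖h - h₀‖ ^ 2)
    (hG' : 0 < G h') :
    F h' / G h' + ‖h' - h₀‖ ^ 2 / G h' ≤ F h₀ / G h₀ := by
  have h1 := hmin h₀ hh₀
  have h2 := hs h'
  have h3 : 0 ≤ μ := by rw [hμ]; positivity
  have h4 : μ * G h₀ = F h₀ := by rw [hμ]; field_simp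
  rw [real_inner_comm] at h2
  have h5 := mul_le_mul_of_nonneg_left h2 h3
  simp only [sub_self, inner_zero_left, mul_zero, norm_zero] at h1
  rw [← hμ, ← add_div, div_le_iff₀ hG']
  linarith
end

section
/- Let E be the Euclidean space ℝⁿ, let F, G : E → ℝ be convex functions, let S ⊆ E be a set, and let h₀ ∈ S with F(h₀) ≥ 0 and G(h₀) > 0. Set μ = F(h₀)/G(h₀). Suppose s ∈ E is a subgradient of G at h₀, and suppose h' ∈ S minimises Φ(h) = F(h) − μ·⟨h − h₀, s⟩ + ‖h − h₀‖² over S. Then F(h') + ‖h' − h₀‖² ≤ μ·G(h'). (Key inequality in the proof of the sufficient decrease lemma.) -/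
open scoped RealInnerProductSpace

/-- Key inequality in the proof of the sufficient decrease lemma. -/
theorem key_inequality
    {n : ℕ}
    (F G : EuclideanSpace ℝ (Fin n) → ℝ)
    (hF : ConvexOn ℝ Set.univ F) (hG : ConvexOn ℝ Set.univ G)
    (S : Set (EuclideanSpace ℝ (Fin n))) (h₀ : EuclideanSpace ℝ (Fin n)) (hh₀ : h₀ ∈ S)
    (hF₀ : 0 ≤ F h₀) (hG₀ : 0 < G h₀)
    (μ : ℝ) (hμ : μ = F h₀ / G h₀)
    (s : EuclideanSpace ℝ (Fin n)) (hs : ∀ h, G h ≥ G h₀ + ⟪s, h - h₀⟫)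
    (h' : EuclideanSpace ℝ (Fin n)) (hh' : h' ∈ S)
    (hmin : ∀ h ∈ S,
      F h' - μ * ⟪h' - h₀, s⟫ + ‖h' - h₀‖ ^ 2 ≤
        F h - μ * ⟪h - h₀, s⟫ + ‖h - h₀‖ ^ 2) :
    F h' + ‖h' - h₀‖ ^ 2 ≤ μ * G h' := by
  have h1 := hmin h₀ hh₀
  have h2 := hs h'
  have hμ0 : 0 ≤ μ := by rw [hμ]; positivity
  have h3 : μ * G h₀ = F h₀ := by rw [hμ]; field_simp
  rw [real_inner_comm] at h2
  have h4 := mul_le_mul_of_nonneg_left h2 hμ0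
  simp only [sub_self, inner_zero_left, norm_zero] at h1
  rw [mul_add] at h4
  linarith
end

section
/- Let E be the Euclidean space ℝⁿ, let F, G : E → ℝ be convex functions with F ≥ 0 everywhere, let S ⊆ E be a set, and let (h_k)_{k∈ℕ} be a sequence in S such that G(h_k) > 0 for all k. Suppose for every k there is a subgradient s_k of G at h_k such that h_{k+1} minimises Φ_k(h) = F(h) − (F(h_k)/G(h_k))·⟨h − h_k, s_k⟩ + ‖h − h_k‖² over S. Then the sequence of quotient values μ_k = F(h_k)/G(h_k) is non-increasing: μ_{k+1} ≤ μ_k for all k ∈ ℕ. -/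
open scoped RealInnerProductSpace

/-- The quotient values of the generalised inverse power method are non-increasing. -/
theorem quotient_nonincreasing
    {n : ℕ}
    (F G : EuclideanSpace ℝ (Fin n) → ℝ)
    (hF : ConvexOn ℝ Set.univ F) (hG : ConvexOn ℝ Set.univ G)
    (hFnonneg : ∀ h, 0 ≤ F h)
    (S : Set (EuclideanSpace ℝ (Fin n)))
    (h : ℕ → EuclideanSpace ℝ (Fin n)) (hhS : ∀ k, h k ∈ S)
    (hGpos : ∀ k, 0 < G (h k))
    (hstep : ∀ k : ℕ, ∃ s : EuclideanSpace ℝ (Fin n),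
      (∀ x, G x ≥ G (h k) + ⟪s, x - h k⟫) ∧
      (∀ x ∈ S,
        F (h (k+1)) - (F (h k) / G (h k)) * ⟪h (k+1) - h k, s⟫ + ‖h (k+1) - h k‖ ^ 2 ≤
          F x - (F (h k) / G (h k)) * ⟪x - h k, s⟫ + ‖x - h k‖ ^ 2)) :
    ∀ k : ℕ, F (h (k+1)) / G (h (k+1)) ≤ F (h k) / G (h k) := by
  intro k
  obtain ⟨s, hs, hmin⟩ := hstep k
  have h1 := hmin (h k) (hhS k)
  have h2 := hs (h (k+1))
  rw [real_inner_comm] at h2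
  simp only [sub_self, inner_zero_left, mul_zero, norm_zero] at h1
  have hmu : 0 ≤ F (h k) / G (h k) := div_nonneg (hFnonneg _) (hGpos k).le
  have hFe : F (h k) / G (h k) * G (h k) = F (h k) := div_mul_cancel₀ _ (hGpos k).ne'
  rw [div_le_iff₀ (hGpos (k+1))]
  have h3 := mul_le_mul_of_nonneg_left h2 hmu
  rw [mul_add, hFe] at h3
  have h4 := sq_nonneg ‖h (k+1) - h k‖
  linarith
end

section
/- Let E be the Euclidean space ℝⁿ, let F, G : E → ℝ be convex functions with F ≥ 0 everywhere, let S ⊆ E be a set, and let (h_k)_{k∈ℕ} be a sequence in S such that G(h_k) > 0 for all k and G(h_k) ≤ M for all k ≥ 1, for some constant M > 0. Suppose for every k there is a subgradient s_k of G at h_k such that h_{k+1} minimises Φ_k(h) = F(h) − (F(h_k)/G(h_k))·⟨h − h_k, s_k⟩ + ‖h − h_k‖² over S. Then for every N ∈ ℕ, the partial sum ∑_{k=0}^{N} ‖h_{k+1} − h_k‖² is bounded by M·F(h₀)/G(h₀); in particular the series ∑_k ‖h_{k+1} − h_k‖² converges. -/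
open scoped RealInnerProductSpace

/-- Square-summability of the iterates gap of the generalised inverse power method. -/
theorem iterates_gap_summable
    {n : ℕ}
    (F G : EuclideanSpace ℝ (Fin n) → ℝ)
    (hF : ConvexOn ℝ Set.univ F) (hG : ConvexOn ℝ Set.univ G)
    (hFnonneg : ∀ h, 0 ≤ F h)
    (S : Set (EuclideanSpace ℝ (Fin n)))
    (h : ℕ → EuclideanSpace ℝ (Fin n)) (hhS : ∀ k, h k ∈ S)
    (hGpos : ∀ k, 0 < G (h k))
    (M : ℝ) (hM : 0 < M) (hGbound : ∀ k : ℕ, 1 ≤ k → G (h k) ≤ M)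
    (hstep : ∀ k : ℕ, ∃ s : EuclideanSpace ℝ (Fin n),
      (∀ x, G x ≥ G (h k) + ⟪s, x - h k⟫) ∧
      (∀ x ∈ S,
        F (h (k+1)) - (F (h k) / G (h k)) * ⟪h (k+1) - h k, s⟫ + ‖h (k+1) - h k‖ ^ 2 ≤
          F x - (F (h k) / G (h k)) * ⟪x - h k, s⟫ + ‖x - h k‖ ^ 2)) :
    (∀ N : ℕ, ∑ k ∈ Finset.range (N + 1), ‖h (k+1) - h k‖ ^ 2 ≤ M * (F (h 0) / G (h 0))) ∧
      Summable (fun k : ℕ => ‖h (k+1) - h k‖ ^ 2) := by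
  have key : ∀ k, ‖h (k+1) - h k‖ ^ 2 ≤ M * (F (h k) / G (h k)) - M * (F (h (k+1)) / G (h (k+1))) := by
    intro k
    obtain ⟨s, hs, hmin⟩ := hstep k
    have h1 := hmin (h k) (hhS k)
    have h2 := hs (h (k+1))
    rw [real_inner_comm] at h2
    simp only [sub_self, inner_zero_left, norm_zero] at h1
    have e0 : F (h k) / G (h k) * G (h k) = F (h k) := div_mul_cancel₀ _ (hGpos k).ne'
    have e1 : F (h (k+1)) / G (h (k+1)) * G (h (k+1)) = F (h (k+1)) :=
      div_mul_cancel₀ _ (hGpos (k+1)).ne'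
    have hm : 0 ≤ F (h k) / G (h k) := div_nonneg (hFnonneg _) (hGpos k).le
    have hb := hGbound (k+1) (by omega)
    have hp := hGpos (k+1)
    have hd := sq_nonneg ‖h (k+1) - h k‖
    generalize F (h k) / G (h k) = a at *
    generalize F (h (k+1)) / G (h (k+1)) = b at *
    have h3 := mul_le_mul_of_nonneg_left h2 hm
    have h4 : ‖h (k+1) - h k‖ ^ 2 ≤ G (h (k+1)) * (a - b) := by nlinarith
    have h5 : 0 ≤ a - b := nonneg_of_mul_nonneg_right (hd.trans h4) hp
    have h6 := mul_le_mul_of_nonneg_right hb h5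
    linarith
  have bound : ∀ N : ℕ, ∑ k ∈ Finset.range N, ‖h (k+1) - h k‖ ^ 2 ≤ M * (F (h 0) / G (h 0)) := by
    intro N
    have h1 := Finset.sum_le_sum (fun k (_ : k ∈ Finset.range N) => key k)
    rw [Finset.sum_range_sub' (fun k => M * (F (h k) / G (h k)))] at h1
    have h2 : 0 ≤ M * (F (h N) / G (h N)) :=
      mul_nonneg hM.le (div_nonneg (hFnonneg _) (hGpos N).le)
    linarith
  exact ⟨fun N => bound (N+1), summable_of_sum_range_le (fun _ => sq_nonneg _) bound⟩
end
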